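/- arXiv:0812.4142 — 6 statements merged into one kernel-verified Lean document; each statement's English description precedes it below -/
import Mathlib

section
/- Let $-1 < v < u < 0$ be real numbers, let $t > 0$, and let $g : (-1, u] \to \mathbb{R}$ be continuous (playing the role of $f_L'$). Define $\theta(\lambda) = \frac{1}{2\sqrt{u-\lambda}} \int_\lambda^u \frac{g(\xi)}{\sqrt{\xi-\lambda}}\,d\xi$ for $\lambda \in (-1, u)$, and $\phi(\lambda) = \int_\lambda^u (g(\xi) + 6t)\sqrt{\xi - \lambda}\,d\xi$. If $6t + \theta(\lambda) < 0$ for every $\lambda \in [-1, u) \setminus \{v\}$, then $\phi$ is differentiable on $(-1, u)$ and $\phi'(\lambda) > 0$ for every $\lambda \in (-1, u) \setminus \{v\}$. -/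
open Set MeasureTheory intervalIntegral

/-- The identity holds for negative `x` as well, where both sides vanish. -/
lemma inv_sqrt_eq_rpow (x : ℝ) : (√x)⁻¹ = x ^ (-(1 / 2) : ℝ) := by
  rcases le_or_gt 0 x with hx | hx
  · rw [Real.rpow_neg hx, Real.sqrt_eq_rpow]
  · rw [Real.sqrt_eq_zero_of_nonpos hx.le, Real.rpow_def_of_neg hx,
      show (-(1 / 2) : ℝ) * Real.pi = -(Real.pi / 2) by ring, Real.cos_neg, Real.cos_pi_div_two]
    simp

lemma intervalIntegrable_inv_sqrt (a b : ℝ) :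
    IntervalIntegrable (fun x => (√x)⁻¹) volume a b := by
  simp_rw [inv_sqrt_eq_rpow]
  exact intervalIntegrable_rpow' (by norm_num)

lemma intervalIntegrable_inv_sqrt_sub_const (a b l : ℝ) :
    IntervalIntegrable (fun ξ => (√(ξ - l))⁻¹) volume a b := by
  simpa using (intervalIntegrable_inv_sqrt (a - l) (b - l)).comp_sub_right l

lemma intervalIntegrable_inv_sqrt_const_sub (a b l : ℝ) :
    IntervalIntegrable (fun ξ => (√(l - ξ))⁻¹) volume a b := by
  simpa using (intervalIntegrable_inv_sqrt (l - a) (l - b)).comp_sub_left l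

lemma integral_inv_sqrt_sub (l u : ℝ) :
    ∫ ξ in l..u, (√(ξ - l))⁻¹ = 2 * √(u - l) := by
  rw [intervalIntegral.integral_comp_sub_right (fun x => (√x)⁻¹) l]
  simp_rw [inv_sqrt_eq_rpow]
  rw [integral_rpow (Or.inl (by norm_num)), sub_self, Real.sqrt_eq_rpow]
  norm_num
  ring

/-- A two-sided bound for increments of the square root, extended by zero to negative numbers. -/
lemma abs_sqrt_sub_sqrt_le {y : ℝ} (hy : y ≠ 0) (x : ℝ) :
    |√x - √y| ≤ ((√y)⁻¹ + (√(-y))⁻¹) * |x - y| := by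
  rcases hy.lt_or_gt with hy | hy
  · rw [Real.sqrt_eq_zero_of_nonpos hy.le, inv_zero, zero_add, sub_zero,
      abs_of_nonneg (Real.sqrt_nonneg x)]
    have hp : 0 < √(-y) := Real.sqrt_pos.2 (by linarith)
    rcases le_or_gt x 0 with hx | hx
    · rw [Real.sqrt_eq_zero_of_nonpos hx]
      positivity
    · rw [abs_of_pos (by linarith), inv_mul_eq_div, le_div_iff₀ hp]
      nlinarith [sq_nonneg (√x - √(-y)), Real.sq_sqrt hx.le,
        Real.sq_sqrt (show 0 ≤ -y by linarith)]
  · rw [Real.sqrt_eq_zero_of_nonpos (show -y ≤ 0 by linarith), inv_zero, add_zero]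
    have hp : 0 < √y := Real.sqrt_pos.2 hy
    have hsy := Real.sq_sqrt hy.le
    rw [inv_mul_eq_div, le_div_iff₀ hp]
    rcases le_or_gt x 0 with hx | hx
    · rw [Real.sqrt_eq_zero_of_nonpos hx, zero_sub, abs_neg, abs_of_pos hp,
        abs_of_neg (by linarith)]
      nlinarith
    · have hsx := Real.sq_sqrt hx.le
      have hfac : x - y = (√x - √y) * (√x + √y) := by linear_combination hsy - hsx
      rw [hfac, abs_mul, abs_of_nonneg (show 0 ≤ √x + √y by positivity)]
      exact mul_le_mul_of_nonneg_left (by linarith [Real.sqrt_nonneg x]) (abs_nonneg _)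

/-- Differentiation of a fractional integral of order `3 / 2` with respect to its lower limit. -/
lemma hasDerivAt_integral_mul_sqrt_sub {h : ℝ → ℝ} {a b l : ℝ}
    (hh : ContinuousOn h (Icc a b)) (hl : l ∈ Ioo a b) :
    HasDerivAt (fun x => ∫ ξ in x..b, h ξ * √(ξ - x))
      (-(1 / 2) * ∫ ξ in l..b, h ξ / √(ξ - l)) l := by
  have hab : a ≤ b := (hl.1.trans hl.2).le
  obtain ⟨C, hC⟩ := isCompact_Icc.exists_bound_of_continuousOn hh
  have hm : AEStronglyMeasurable h (volume.restrict (Ioc a b)) :=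
    (hh.mono Ioc_subset_Icc_self).aestronglyMeasurable measurableSet_Ioc
  have hne : ∀ᵐ ξ ∂volume.restrict (Ioc a b), ξ ≠ l :=
    ae_restrict_of_ae (Measure.ae_ne volume l)
  -- both integrals extend to `(a, b]`, since `√` vanishes on negative numbers
  have hext : ∀ x ∈ Ioo a b, ∀ f : ℝ → ℝ, (∀ ξ ≤ x, f ξ = 0) →
      ∫ ξ in x..b, f ξ = ∫ ξ in Ioc a b, f ξ := by
    intro x hx f hf
    rw [integral_of_le hx.2.le]
    refine (setIntegral_eq_of_subset_of_forall_sdiff_eq_zero measurableSet_Ioc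
      (Ioc_subset_Ioc_left hx.1.le) fun ξ hξ => hf ξ ?_).symm
    by_contra hlt
    exact hξ.2 ⟨not_le.1 hlt, hξ.1.2⟩
  have key := hasFDerivAt_integral_of_dominated_loc_of_lip' (𝕜 := ℝ)
    (μ := volume.restrict (Ioc a b)) (s := Ioo a b) (x₀ := l)
    (F := fun x ξ => h ξ * √(ξ - x))
    (F' := fun ξ => ContinuousLinearMap.toSpanSingleton ℝ (h ξ * (-(1 / 2) * (√(ξ - l))⁻¹)))
    (bound := fun ξ => C * ((√(ξ - l))⁻¹ + (√(l - ξ))⁻¹))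
    (Ioo_mem_nhds hl.1 hl.2) ?_ ?_ ?_ ?_ ?_ ?_
  · obtain ⟨hint, hder⟩ := key
    have hder' := hder.hasDerivAt
    rw [ContinuousLinearMap.integral_apply hint] at hder'
    refine (hder'.congr_of_eventuallyEq ?_).congr_deriv ?_
    · filter_upwards [Ioo_mem_nhds hl.1 hl.2] with x hx
      refine hext x hx _ fun ξ hξ => ?_
      rw [Real.sqrt_eq_zero_of_nonpos (by linarith), mul_zero]
    · rw [hext l hl _ fun ξ hξ => by
        rw [Real.sqrt_eq_zero_of_nonpos (by linarith), div_zero], ← MeasureTheory.integral_const_mul]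
      refine integral_congr_ae (.of_forall fun ξ => ?_)
      simp only [ContinuousLinearMap.toSpanSingleton_apply, one_smul]
      ring
  · intro x _
    exact hm.mul (by fun_prop)
  · rw [← IntegrableOn, ← integrableOn_Icc_iff_integrableOn_Ioc]
    exact (hh.mul (by fun_prop)).integrableOn_Icc
  · refine (ContinuousLinearMap.toSpanSingletonCLE (𝕜 := ℝ)
      (E := ℝ)).continuous.comp_aestronglyMeasurable (hm.mul ?_)
    exact Measurable.aestronglyMeasurable (by fun_prop)
  · filter_upwards [hne, ae_restrict_mem measurableSet_Ioc] with ξ hξ hmem x _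
    have hbd := abs_sqrt_sub_sqrt_le (sub_ne_zero.2 hξ) (ξ - x)
    rw [neg_sub, sub_sub_sub_cancel_left, abs_sub_comm l x] at hbd
    rw [← mul_sub, norm_mul, mul_assoc]
    exact mul_le_mul (hC ξ (Ioc_subset_Icc_self hmem)) hbd (norm_nonneg _)
      ((norm_nonneg _).trans (hC ξ (Ioc_subset_Icc_self hmem)))
  · exact (intervalIntegrable_iff_integrableOn_Ioc_of_le hab).1
      (((intervalIntegrable_inv_sqrt_sub_const a b l).add
        (intervalIntegrable_inv_sqrt_const_sub a b l)).const_mul C)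
  · filter_upwards [hne] with ξ hξ
    have hsq := (((hasDerivAt_id l).const_sub ξ).sqrt (sub_ne_zero.2 hξ)).const_mul (h ξ)
    refine (hsq.congr_deriv ?_).hasFDerivAt
    simp only [id_eq]
    ring

/-- First inequality of Proposition 3.1: under the condition `6t + θ(λ) < 0` on
`[-1, u) \ {v}`, the phase `φ` is differentiable on `(-1, u)` with positive derivative
away from `v`. -/
theorem stmt0 (u v t : ℝ) (hv : -1 < v) (hvu : v < u) (hu : u < 0) (ht : 0 < t)
    (g : ℝ → ℝ) (hg : ContinuousOn g (Set.Ioc (-1) u))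
    (θ φ : ℝ → ℝ)
    (hθ : ∀ l ∈ Set.Ioo (-1 : ℝ) u,
      θ l = (1 / (2 * Real.sqrt (u - l))) * ∫ ξ in l..u, g ξ / Real.sqrt (ξ - l))
    (hφ : ∀ l ∈ Set.Ioo (-1 : ℝ) u,
      φ l = ∫ ξ in l..u, (g ξ + 6 * t) * Real.sqrt (ξ - l))
    (hneg : ∀ l ∈ Set.Ico (-1 : ℝ) u, l ≠ v → 6 * t + θ l < 0) :
    ∃ φ' : ℝ → ℝ, (∀ l ∈ Set.Ioo (-1 : ℝ) u, HasDerivAt φ (φ' l) l) ∧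
      ∀ l ∈ Set.Ioo (-1 : ℝ) u, l ≠ v → 0 < φ' l := by
  refine ⟨fun l => -√(u - l) * (6 * t + θ l), fun l hl => ?_, fun l hl hlv => ?_⟩
  · obtain ⟨a, ha, hal⟩ := exists_between hl.1
    have hder := hasDerivAt_integral_mul_sqrt_sub (h := fun ξ => g ξ + 6 * t)
      ((hg.mono (Icc_subset_Ioc ha le_rfl)).add continuousOn_const) ⟨hal, hl.2⟩
    refine (hder.congr_of_eventuallyEq ?_).congr_deriv ?_
    · filter_upwards [Ioo_mem_nhds hl.1 hl.2] with x hx using hφ x hx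
    · have hgi : IntervalIntegrable (fun ξ => g ξ / √(ξ - l)) volume l u := by
        simp_rw [div_eq_mul_inv]
        refine (intervalIntegrable_inv_sqrt_sub_const l u l).continuousOn_mul (hg.mono ?_)
        rw [uIcc_of_le hl.2.le]
        exact Icc_subset_Ioc hl.1 le_rfl
      have hpos : √(u - l) ≠ 0 := (Real.sqrt_pos.2 (sub_pos.2 hl.2)).ne'
      have hsplit : ∫ ξ in l..u, (g ξ + 6 * t) / √(ξ - l) =
          (∫ ξ in l..u, g ξ / √(ξ - l)) + 6 * t * (2 * √(u - l)) := by
        rw [← integral_inv_sqrt_sub l u, ← intervalIntegral.integral_const_mul,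
          ← intervalIntegral.integral_add hgi
            ((intervalIntegrable_inv_sqrt_sub_const l u l).const_mul _)]
        simp_rw [add_div, div_eq_mul_inv]
      beta_reduce
      rw [hsplit, hθ l hl]
      field_simp
      ring
  · exact mul_pos_of_neg_of_neg (neg_neg_of_pos (Real.sqrt_pos.2 (sub_pos.2 hl.2)))
      (hneg l (Ioo_subset_Ico_self hl) hlv)
end

section
/- Let $-1 < u < 0$ be real, let $t > 0$, and let $g : [u, 0] \to \mathbb{R}$ be continuous. Define $X(\lambda) = \int_u^\lambda (g(\xi) + 6t)\sqrt{\lambda - \xi}\,d\xi$ for $\lambda \in [u, 0]$. If $\int_u^\mu \frac{g(\xi) + 6t}{\sqrt{\mu - \xi}}\,d\xi < 0$ for every $\mu \in (u, 0]$, then $X(\lambda) < 0$ for every $\lambda \in (u, 0]$. -/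
open Set MeasureTheory intervalIntegral

lemma inv_sqrt_eq_rpow_of_nonneg {x : ℝ} (hx : 0 ≤ x) : (√x)⁻¹ = x ^ (-(1 / 2) : ℝ) := by
  rw [Real.rpow_neg hx, Real.sqrt_eq_rpow]

lemma intervalIntegrable_inv_sqrt_sub {a b c : ℝ} (hac : a ≤ c) (hcb : c ≤ b) :
    IntervalIntegrable (fun y => (√(y - c))⁻¹) volume a b := by
  have hleft : IntervalIntegrable (fun y => (√(y - c))⁻¹) volume a c := by
    refine (IntervalIntegrable.zero (μ := volume) (a := a) (b := c)).congr ?_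
    intro y hy
    rw [uIoc_of_le hac] at hy
    simp [Real.sqrt_eq_zero_of_nonpos (sub_nonpos.2 hy.2)]
  have hright : IntervalIntegrable (fun y => (√(y - c))⁻¹) volume c b := by
    have h := (intervalIntegrable_rpow' (a := 0) (b := b - c)
      (r := (-(1 / 2) : ℝ)) (by norm_num)).comp_sub_right c
    rw [zero_add, sub_add_cancel] at h
    refine h.congr ?_
    intro y hy
    rw [uIoc_of_le hcb] at hy
    exact (inv_sqrt_eq_rpow_of_nonneg (sub_nonneg.2 hy.1.le)).symm
  exact hleft.trans hright

lemma integral_inv_sqrt_sub_s1 {a b c : ℝ} (hac : a ≤ c) (hcb : c ≤ b) :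
    ∫ y in a..b, (√(y - c))⁻¹ = 2 * √(b - c) := by
  rw [← integral_add_adjacent_intervals (intervalIntegrable_inv_sqrt_sub hac le_rfl)
    (intervalIntegrable_inv_sqrt_sub le_rfl hcb)]
  have hleft : ∫ y in a..c, (√(y - c))⁻¹ = 0 := by
    refine integral_zero_ae (Filter.Eventually.of_forall fun y hy => ?_)
    rw [uIoc_of_le hac] at hy
    simp [Real.sqrt_eq_zero_of_nonpos (sub_nonpos.2 hy.2)]
  have hright : ∫ y in c..b, (√(y - c))⁻¹ = 2 * √(b - c) := by
    rw [integral_comp_sub_right (fun x => (√x)⁻¹) c, sub_self]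
    have hcongr : ∫ x in (0 : ℝ)..(b - c), (√x)⁻¹ =
        ∫ x in (0 : ℝ)..(b - c), x ^ (-(1 / 2) : ℝ) := by
      refine integral_congr fun x hx => ?_
      rw [uIcc_of_le (sub_nonneg.2 hcb)] at hx
      exact inv_sqrt_eq_rpow_of_nonneg hx.1
    rw [hcongr, integral_rpow (Or.inl (by norm_num)), Real.sqrt_eq_rpow]
    norm_num
    ring
  rw [hleft, hright, zero_add]

/-- The Abel kernel, restricted to a square, is integrable against a continuous density. Outside
the triangle `x < y` the kernel vanishes by the conventions for `√` and `⁻¹`. -/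
lemma integrable_prod_mul_inv_sqrt_sub {a b : ℝ} {h : ℝ → ℝ} (hh : ContinuousOn h (Icc a b)) :
    Integrable (fun p : ℝ × ℝ => h p.1 * (√(p.2 - p.1))⁻¹)
      ((volume.restrict (Ioc a b)).prod (volume.restrict (Ioc a b))) := by
  have hmeas : AEStronglyMeasurable h (volume.restrict (Ioc a b)) :=
    (hh.mono Ioc_subset_Icc_self).aestronglyMeasurable measurableSet_Ioc
  refine (integrable_prod_iff (hmeas.comp_fst.mul
    (by fun_prop : Measurable fun p : ℝ × ℝ => (√(p.2 - p.1))⁻¹).aestronglyMeasurable)).2 ⟨?_, ?_⟩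
  · filter_upwards [ae_restrict_mem measurableSet_Ioc] with x hx
    exact ((intervalIntegrable_iff_integrableOn_Ioc_of_le (hx.1.le.trans hx.2)).1
      (intervalIntegrable_inv_sqrt_sub hx.1.le hx.2)).const_mul (h x)
  · have hbound : Integrable (fun x => ‖h x‖ * (2 * √(b - x))) (volume.restrict (Ioc a b)) :=
      ((hh.norm.mul (by fun_prop)).integrableOn_Icc).mono_set Ioc_subset_Icc_self
    refine hbound.congr ?_
    filter_upwards [ae_restrict_mem measurableSet_Ioc] with x hx
    rw [← integral_inv_sqrt_sub_s1 hx.1.le hx.2, integral_of_le (hx.1.le.trans hx.2),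
      ← MeasureTheory.integral_const_mul]
    simp [norm_mul, abs_of_nonneg]

lemma integral_div_sqrt_sub_eq_setIntegral {a b y : ℝ} (h : ℝ → ℝ) (hy : y ∈ Ioc a b) :
    ∫ x in a..y, h x / √(y - x) = ∫ x in Ioc a b, h x * (√(y - x))⁻¹ := by
  rw [integral_of_le hy.1.le]
  simp only [div_eq_mul_inv]
  refine (setIntegral_eq_of_subset_of_forall_sdiff_eq_zero measurableSet_Ioc
    (Ioc_subset_Ioc_right hy.2) fun x hx => ?_).symm
  have hyx : y ≤ x := le_of_not_ge fun hxy => hx.2 ⟨hx.1.1, hxy⟩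
  simp [Real.sqrt_eq_zero_of_nonpos (sub_nonpos.2 hyx)]

lemma intervalIntegrable_integral_div_sqrt_sub {a b : ℝ} (hab : a ≤ b) {h : ℝ → ℝ}
    (hh : ContinuousOn h (Icc a b)) :
    IntervalIntegrable (fun y => ∫ x in a..y, h x / √(y - x)) volume a b := by
  rw [intervalIntegrable_iff_integrableOn_Ioc_of_le hab]
  refine (integrable_prod_mul_inv_sqrt_sub hh).integral_prod_right.congr ?_
  filter_upwards [ae_restrict_mem measurableSet_Ioc] with y hy
  exact (integral_div_sqrt_sub_eq_setIntegral h hy).symm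

lemma integral_integral_div_sqrt_sub {a b : ℝ} (hab : a ≤ b) {h : ℝ → ℝ}
    (hh : ContinuousOn h (Icc a b)) :
    ∫ y in a..b, ∫ x in a..y, h x / √(y - x) = 2 * ∫ x in a..b, h x * √(b - x) := by
  rw [integral_of_le hab, integral_of_le hab,
    setIntegral_congr_fun measurableSet_Ioc fun y hy => integral_div_sqrt_sub_eq_setIntegral h hy,
    ← integral_integral_swap (integrable_prod_mul_inv_sqrt_sub hh),
    ← MeasureTheory.integral_const_mul]
  refine setIntegral_congr_fun measurableSet_Ioc fun x hx => ?_
  simp only [MeasureTheory.integral_const_mul]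
  rw [← integral_of_le hab, integral_inv_sqrt_sub_s1 hx.1.le hx.2]
  ring

/-- Real form of the second inequality of Proposition 3.1: if the Abel-type averaged
integral of `g + 6t` is negative on `(u, 0]`, then `X(λ) = ∫_u^λ (g(ξ)+6t)√(λ-ξ) dξ`
is negative on `(u, 0]`. -/
theorem stmt1 (u t : ℝ) (hu1 : -1 < u) (hu0 : u < 0) (ht : 0 < t)
    (g : ℝ → ℝ) (hg : ContinuousOn g (Set.Icc u 0))
    (X : ℝ → ℝ)
    (hX : ∀ l ∈ Set.Icc u (0 : ℝ), X l = ∫ ξ in u..l, (g ξ + 6 * t) * Real.sqrt (l - ξ))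
    (hneg : ∀ μ ∈ Set.Ioc u (0 : ℝ),
      (∫ ξ in u..μ, (g ξ + 6 * t) / Real.sqrt (μ - ξ)) < 0) :
    ∀ l ∈ Set.Ioc u (0 : ℝ), X l < 0 := by
  intro l hl
  have hh : ContinuousOn (fun ξ => g ξ + 6 * t) (Icc u l) :=
    (hg.mono (Icc_subset_Icc_right hl.2)).add continuousOn_const
  have hpos := intervalIntegral_pos_of_pos_on
    (intervalIntegrable_integral_div_sqrt_sub hl.1.le hh).neg
    (fun μ hμ => neg_pos.2 (hneg μ ⟨hμ.1, hμ.2.le.trans hl.2⟩)) hl.1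
  have heq := integral_integral_div_sqrt_sub hl.1.le hh
  simp only [Pi.neg_apply, intervalIntegral.integral_neg] at hpos
  rw [hX l ⟨hl.1.le, hl.2⟩]
  linarith
end

section
/- Let $u < 0$ and let $h : (u, 0) \to \mathbb{R}$ be measurable with $\eta \mapsto h(\eta)/\sqrt{\eta - u}$ integrable on $(u, 0)$. Define $G(\lambda) = \frac{(u - \lambda)^{1/2}}{\pi} \int_u^0 \frac{h(\eta)}{\sqrt{\eta - u}\,(\eta - \lambda)}\,d\eta$ for $\lambda \in \mathbb{C} \setminus [u, \infty)$. Then for every $\lambda_0 > 0$, the boundary values $G_+(\lambda_0) = \lim_{\delta \to 0^+} G(\lambda_0 + i\delta)$ and $G_-(\lambda_0) = \lim_{\delta \to 0^+} G(\lambda_0 - i\delta)$ exist and satisfy $G_+(\lambda_0) + G_-(\lambda_0) = 0$. -/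
open Set MeasureTheory intervalIntegral Complex Filter

/-- The Cauchy transform of an integrable density on `[a, b]` is continuous to the right of `b`. -/
lemma continuousAt_cauchyIntegral_of_lt_re {a b : ℝ} (hab : a ≤ b) {f : ℝ → ℂ}
    (hf : IntervalIntegrable f volume a b) {z : ℂ} (hz : b < z.re) :
    ContinuousAt (fun l : ℂ => ∫ η in a..b, f η / ((η : ℂ) - l)) z := by
  set d : ℝ := (z.re - b) / 2 with hd
  have hd0 : 0 < d := by rw [hd]; linarith
  have hnear : ∀ᶠ l : ℂ in nhds z, b + d < l.re :=
    Complex.continuous_re.continuousAt.eventually_const_lt (by rw [hd]; linarith)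
  refine continuousAt_of_dominated_interval (bound := fun η => ‖f η‖ / d) ?_ ?_
    (hf.norm.div_const d) ?_
  · refine Eventually.of_forall fun l => ?_
    have hmeas : Measurable fun η : ℝ => ((η : ℂ) - l)⁻¹ := by fun_prop
    simpa only [div_eq_mul_inv, Pi.mul_def] using
      hf.def'.aestronglyMeasurable.mul hmeas.aestronglyMeasurable
  · filter_upwards [hnear] with l hl
    refine Eventually.of_forall fun η hη => ?_
    rw [uIoc_of_le hab] at hη
    rw [norm_div]
    have hre : d ≤ ‖(η : ℂ) - l‖ := by
      refine le_trans ?_ (Complex.abs_re_le_norm _)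
      rw [Complex.sub_re, Complex.ofReal_re]
      exact le_trans (by linarith [hη.2]) (neg_le_abs _)
    gcongr
  · refine Eventually.of_forall fun η hη => ?_
    rw [uIoc_of_le hab] at hη
    have hne : (η : ℂ) - z ≠ 0 := fun h0 => by
      have := congrArg Complex.re h0
      simp only [Complex.sub_re, Complex.ofReal_re, Complex.zero_re] at this
      linarith [hη.2]
    exact continuousAt_const.div (continuousAt_const.sub continuousAt_id) hne

/-- The two one-sided limits of the principal square root at a point of its branch cut. -/
lemma tendsto_cpow_half_branchCut {z : ℂ} (hre : z.re < 0) (him : z.im = 0) :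
    Tendsto (fun w : ℂ => w ^ ((1 : ℂ) / 2)) (nhdsWithin z {w | w.im < 0})
        (nhds (-(I * Complex.exp (Real.log ‖z‖ / 2)))) ∧
      Tendsto (fun w : ℂ => w ^ ((1 : ℂ) / 2)) (nhdsWithin z {w | 0 ≤ w.im})
        (nhds (I * Complex.exp (Real.log ‖z‖ / 2))) := by
  have hz : z ≠ 0 := fun h0 => by simp [h0] at hre
  have hpow : ∀ s : Set ℂ, (fun w : ℂ => Complex.exp (Complex.log w * (1 / 2)))
      =ᶠ[nhdsWithin z s] fun w : ℂ => w ^ ((1 : ℂ) / 2) := fun s => by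
    filter_upwards [mem_nhdsWithin_of_mem_nhds (isOpen_ne.mem_nhds hz)] with w hw
    rw [Complex.cpow_def_of_ne_zero hw]
  constructor
  · have key := (Complex.continuous_exp.tendsto _).comp
      ((Complex.tendsto_log_nhdsWithin_im_neg_of_re_neg_of_im_zero hre him).mul_const (1 / 2 : ℂ))
    rw [show ((Real.log ‖z‖ : ℂ) - Real.pi * I) * (1 / 2)
      = -(Real.pi / 2 * I) + Real.log ‖z‖ / 2 by ring, Complex.exp_add, Complex.exp_neg,
      Complex.exp_pi_div_two_mul_I, Complex.inv_I, neg_mul] at key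
    exact key.congr' (hpow _)
  · have key := (Complex.continuous_exp.tendsto _).comp
      ((Complex.tendsto_log_nhdsWithin_im_nonneg_of_re_neg_of_im_zero hre him).mul_const
        (1 / 2 : ℂ))
    rw [show ((Real.log ‖z‖ : ℂ) + Real.pi * I) * (1 / 2)
      = Real.pi / 2 * I + Real.log ‖z‖ / 2 by ring, Complex.exp_add,
      Complex.exp_pi_div_two_mul_I] at key
    exact key.congr' (hpow _)

/-- Jump relation (3.7) of the `G`-function on the positive half-line:
the boundary values `G_±(λ₀)` exist for `λ₀ > 0` and satisfy `G_+(λ₀) + G_-(λ₀) = 0`. -/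
theorem stmt9 (u : ℝ) (hu : u < 0) (h : ℝ → ℝ) (hmeas : Measurable h)
    (hint : IntervalIntegrable (fun η => h η / Real.sqrt (η - u)) volume u 0)
    (G : ℂ → ℂ)
    (hG : ∀ l : ℂ, G l = (((u : ℂ) - l) ^ ((1 : ℂ) / 2)) / (Real.pi : ℂ) *
        ∫ η in u..(0 : ℝ), (h η : ℂ) / ((Real.sqrt (η - u) : ℂ) * ((η : ℂ) - l))) :
    ∀ l₀ : ℝ, 0 < l₀ →
      ∃ Gp Gm : ℂ,
        Tendsto (fun δ : ℝ => G ((l₀ : ℂ) + δ * Complex.I))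
          (nhdsWithin 0 (Set.Ioi 0)) (nhds Gp) ∧
        Tendsto (fun δ : ℝ => G ((l₀ : ℂ) - δ * Complex.I))
          (nhdsWithin 0 (Set.Ioi 0)) (nhds Gm) ∧
        Gp + Gm = 0 := by
  intro l₀ hl₀
  have hfint : IntervalIntegrable
      (fun η => ((h η / Real.sqrt (η - u) : ℝ) : ℂ)) volume u 0 :=
    ⟨hint.1.ofReal, hint.2.ofReal⟩
  have hcont := continuousAt_cauchyIntegral_of_lt_re hu.le hfint (z := (l₀ : ℂ)) (by simpa)
  simp only [Complex.ofReal_div, div_div] at hcont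
  obtain ⟨hneg, hpos⟩ := tendsto_cpow_half_branchCut (z := (u : ℂ) - l₀)
    (by simp only [sub_re, ofReal_re]; linarith) (by simp)
  have hadd : Tendsto (fun δ : ℝ => (l₀ : ℂ) + δ * I) (nhdsWithin 0 (Ioi 0)) (nhds l₀) :=
    (Continuous.tendsto' (by fun_prop) _ _ (by simp)).mono_left nhdsWithin_le_nhds
  have hsub : Tendsto (fun δ : ℝ => (l₀ : ℂ) - δ * I) (nhdsWithin 0 (Ioi 0)) (nhds l₀) :=
    (Continuous.tendsto' (by fun_prop) _ _ (by simp)).mono_left nhdsWithin_le_nhds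
  have hbelow : Tendsto (fun δ : ℝ => (u : ℂ) - (l₀ + δ * I)) (nhdsWithin 0 (Ioi 0))
      (nhdsWithin ((u : ℂ) - l₀) {w | w.im < 0}) :=
    tendsto_nhdsWithin_iff.2 ⟨tendsto_const_nhds.sub hadd, by
      filter_upwards [self_mem_nhdsWithin] with δ hδ
      simpa using hδ⟩
  have habove : Tendsto (fun δ : ℝ => (u : ℂ) - (l₀ - δ * I)) (nhdsWithin 0 (Ioi 0))
      (nhdsWithin ((u : ℂ) - l₀) {w | 0 ≤ w.im}) :=
    tendsto_nhdsWithin_iff.2 ⟨tendsto_const_nhds.sub hsub, by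
      filter_upwards [self_mem_nhdsWithin] with δ hδ
      simpa using (mem_Ioi.1 hδ).le⟩
  simp only [hG]
  refine ⟨_, _, ((hneg.comp hbelow).div_const _).mul (hcont.tendsto.comp hadd),
    ((hpos.comp habove).div_const _).mul (hcont.tendsto.comp hsub), ?_⟩
  ring
end

section
/- Let $u < 0$ and let $h : [u, 0] \to \mathbb{R}$ be H\"older continuous with some exponent $\beta \in (0, 1]$. Define $G(\lambda) = \frac{(u - \lambda)^{1/2}}{\pi} \int_u^0 \frac{h(\eta)}{\sqrt{\eta - u}\,(\eta - \lambda)}\,d\eta$ for $\lambda \in \mathbb{C} \setminus [u, \infty)$. Then for every $\lambda_0 \in (u, 0)$, the boundary values $G_+(\lambda_0) = \lim_{\delta \to 0^+} G(\lambda_0 + i\delta)$ and $G_-(\lambda_0) = \lim_{\delta \to 0^+} G(\lambda_0 - i\delta)$ exist and satisfy $G_+(\lambda_0) + G_-(\lambda_0) = 2 h(\lambda_0)$. -/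
open Set MeasureTheory intervalIntegral Complex Filter
open scoped Topology

/-- The regularised Cauchy integral has the same vertical limit from both sides. -/
theorem tendsto_integral_sub_div_vertical {a b x σ : ℝ} (hab : a ≤ b)
    {f : ℝ → ℂ} {B : ℝ → ℝ} (hf : ContinuousOn f (Ioc a b))
    (hB : IntervalIntegrable B volume a b)
    (hfB : ∀ t ∈ Ioc a b, t ≠ x → ‖f t - f x‖ ≤ B t * |t - x|) (hσ : σ ≠ 0) :
    (∀ δ : ℝ, 0 < δ → IntervalIntegrable
      (fun t : ℝ => (f t - f x) / ((t : ℂ) - (x + (σ * δ : ℝ) * I))) volume a b) ∧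
    Tendsto (fun δ : ℝ => ∫ t in a..b, (f t - f x) / ((t : ℂ) - (x + (σ * δ : ℝ) * I)))
      (𝓝[>] 0) (𝓝 (∫ t in a..b, (f t - f x) / ((t : ℂ) - x))) := by
  have hne : ∀ᵐ t : ℝ, t ≠ x := by simp [ae_iff]
  have hmeas : ∀ δ : ℝ, 0 < δ → AEStronglyMeasurable
      (fun t : ℝ => (f t - f x) / ((t : ℂ) - (x + (σ * δ : ℝ) * I)))
      (volume.restrict (uIoc a b)) := by
    intro δ hδ
    rw [uIoc_of_le hab]
    refine ContinuousOn.aestronglyMeasurable ?_ measurableSet_Ioc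
    refine (hf.sub continuousOn_const).div (by fun_prop) fun t _ h0 => ?_
    have := congrArg Complex.im h0
    simp [hσ, hδ.ne'] at this
  have hbound : ∀ δ : ℝ, 0 < δ → ∀ᵐ t : ℝ, t ∈ uIoc a b →
      ‖(f t - f x) / ((t : ℂ) - (x + (σ * δ : ℝ) * I))‖ ≤ B t := by
    intro δ _
    filter_upwards [hne] with t ht hmem
    rw [uIoc_of_le hab] at hmem
    have hpos : 0 < |t - x| := abs_pos.mpr (sub_ne_zero.mpr ht)
    have hle : |t - x| ≤ ‖(t : ℂ) - (x + (σ * δ : ℝ) * I)‖ := by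
      simpa using Complex.abs_re_le_norm ((t : ℂ) - (x + (σ * δ : ℝ) * I))
    have hB0 : 0 ≤ B t :=
      nonneg_of_mul_nonneg_left ((norm_nonneg _).trans (hfB t hmem ht)) hpos
    rw [norm_div, div_le_iff₀ (hpos.trans_le hle)]
    exact (hfB t hmem ht).trans (mul_le_mul_of_nonneg_left hle hB0)
  refine ⟨fun δ hδ => ?_, ?_⟩
  · refine hB.mono_fun (hmeas δ hδ) ?_
    refine (ae_restrict_iff' measurableSet_uIoc).mpr ?_
    filter_upwards [hbound δ hδ] with t ht hmem
    exact (ht hmem).trans (le_abs_self _)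
  · refine intervalIntegral.tendsto_integral_filter_of_dominated_convergence B ?_ ?_ hB ?_
    · filter_upwards [self_mem_nhdsWithin] with δ hδ using hmeas δ hδ
    · filter_upwards [self_mem_nhdsWithin] with δ hδ using hbound δ hδ
    · filter_upwards [hne] with t ht _
      refine tendsto_const_nhds.div ?_ ?_
      · have : Continuous fun δ : ℝ => (t : ℂ) - (x + (σ * δ : ℝ) * I) := by fun_prop
        simpa using (this.tendsto 0).mono_left nhdsWithin_le_nhds
      · exact sub_ne_zero.mpr (by exact_mod_cast ht)

theorem integral_inv_ofReal_sub {a b : ℝ} {z : ℂ} (hz : z.im ≠ 0) :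
    IntervalIntegrable (fun t : ℝ => ((t : ℂ) - z)⁻¹) volume a b ∧
    ∫ t in a..b, ((t : ℂ) - z)⁻¹ = Complex.log (b - z) - Complex.log (a - z) := by
  have hne : ∀ t : ℝ, (t : ℂ) - z ≠ 0 := fun t h0 => hz (by simpa using congrArg Complex.im h0)
  have hinteg : IntervalIntegrable (fun t : ℝ => ((t : ℂ) - z)⁻¹) volume a b :=
    (Continuous.inv₀ (by fun_prop) hne).intervalIntegrable a b
  refine ⟨hinteg, ?_⟩
  refine integral_eq_sub_of_hasDerivAt (f := fun t : ℝ => Complex.log ((t : ℂ) - z))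
    (fun t _ => ?_) hinteg
  have h1 : HasDerivAt (fun t : ℝ => (t : ℂ) - z) 1 t :=
    (Complex.ofRealCLM.hasDerivAt (x := t)).sub_const z
  simpa using h1.clog_real (Or.inr (by simpa using hz))

/-- Vertical boundary values of the logarithm on the negative real axis. -/
theorem tendsto_log_vertical {c σ : ℝ} (hc : 0 < c) (hσ : σ = 1 ∨ σ = -1) :
    Tendsto (fun δ : ℝ => Complex.log (-(c : ℂ) - (σ * δ : ℝ) * I)) (𝓝[>] 0)
      (𝓝 (Real.log c - σ * Real.pi * I)) := by
  have hcont : Tendsto (fun δ : ℝ => -(c : ℂ) - (σ * δ : ℝ) * I) (𝓝[>] 0) (𝓝 (-(c : ℂ))) := by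
    have : Continuous fun δ : ℝ => -(c : ℂ) - (σ * δ : ℝ) * I := by fun_prop
    simpa using (this.tendsto 0).mono_left nhdsWithin_le_nhds
  rcases hσ with rfl | rfl
  · have := (tendsto_log_nhdsWithin_im_neg_of_re_neg_of_im_zero
      (z := -(c : ℂ)) (by simpa using hc) (by simp)).comp
      (tendsto_nhdsWithin_iff.mpr ⟨hcont, by
        filter_upwards [self_mem_nhdsWithin] with δ hδ
        simpa using hδ⟩)
    simpa [abs_of_pos hc, Function.comp_def] using this
  · have := (tendsto_log_nhdsWithin_im_nonneg_of_re_neg_of_im_zero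
      (z := -(c : ℂ)) (by simpa using hc) (by simp)).comp
      (tendsto_nhdsWithin_iff.mpr ⟨hcont, by
        filter_upwards [self_mem_nhdsWithin] with δ hδ
        simpa using (le_of_lt hδ : (0:ℝ) ≤ δ)⟩)
    simpa [abs_of_pos hc, Function.comp_def] using this

theorem intervalIntegrable_abs_sub_rpow {a b x r : ℝ} (hr : -1 < r) :
    IntervalIntegrable (fun t : ℝ => |t - x| ^ r) volume a b := by
  have right : ∀ c, x ≤ c → IntervalIntegrable (fun t : ℝ => |t - x| ^ r) volume x c := by
    intro c hc
    have := (intervalIntegrable_rpow' (a := 0) (b := c - x) hr).comp_sub_right x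
    simp only [zero_add, sub_add_cancel] at this
    refine this.congr fun t ht => ?_
    rw [uIoc_of_le hc] at ht
    rw [abs_of_nonneg (by linarith [ht.1])]
  have left : ∀ c, c ≤ x → IntervalIntegrable (fun t : ℝ => |t - x| ^ r) volume x c := by
    intro c hc
    have := (intervalIntegrable_rpow' (a := 0) (b := x - c) hr).comp_sub_left x
    simp only [sub_zero, sub_sub_cancel] at this
    refine this.congr fun t ht => ?_
    rw [uIoc_of_ge hc] at ht
    rw [abs_of_nonpos (by linarith [ht.2]), neg_sub]
  have all : ∀ c, IntervalIntegrable (fun t : ℝ => |t - x| ^ r) volume x c :=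
    fun c => (le_total x c).elim (right c) (left c)
  exact (all a).symm.trans (all b)

/-- Vertical boundary values of the Cauchy integral of a function which is regular at `x`. -/
theorem tendsto_cauchyIntegral_vertical {a b x σ : ℝ} (hx : x ∈ Ioo a b)
    {f : ℝ → ℂ} {B : ℝ → ℝ} (hf : ContinuousOn f (Ioc a b))
    (hB : IntervalIntegrable B volume a b)
    (hfB : ∀ t ∈ Ioc a b, t ≠ x → ‖f t - f x‖ ≤ B t * |t - x|) (hσ : σ = 1 ∨ σ = -1) :
    Tendsto (fun δ : ℝ => ∫ t in a..b, f t / ((t : ℂ) - (x + (σ * δ : ℝ) * I))) (𝓝[>] 0)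
      (𝓝 ((∫ t in a..b, (f t - f x) / ((t : ℂ) - x)) +
        f x * (Real.log (b - x) - (Real.log (x - a) - σ * Real.pi * I)))) := by
  have hσ0 : σ ≠ 0 := by rcases hσ with rfl | rfl <;> norm_num
  obtain ⟨hinteg, hlim⟩ := tendsto_integral_sub_div_vertical (hx.1.trans hx.2).le hf hB hfB hσ0
  have hlogb : Tendsto (fun δ : ℝ => Complex.log (b - (x + (σ * δ : ℝ) * I))) (𝓝[>] 0)
      (𝓝 (Real.log (b - x))) := by
    have hcont : Continuous fun δ : ℝ => (b : ℂ) - (x + (σ * δ : ℝ) * I) := by fun_prop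
    have hval : (b : ℂ) - (x + (σ * (0 : ℝ) : ℝ) * I) = ((b - x : ℝ) : ℂ) := by simp
    have hpos : (0 : ℝ) < b - x := sub_pos.mpr hx.2
    have := (hcont.tendsto 0).mono_left (nhdsWithin_le_nhds (s := Ioi (0 : ℝ)))
    rw [hval] at this
    rw [Complex.ofReal_log hpos.le]
    exact this.clog (Complex.ofReal_mem_slitPlane.mpr hpos)
  have hloga : Tendsto (fun δ : ℝ => Complex.log (a - (x + (σ * δ : ℝ) * I))) (𝓝[>] 0)
      (𝓝 (Real.log (x - a) - σ * Real.pi * I)) := by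
    refine (tendsto_log_vertical (sub_pos.mpr hx.1) hσ).congr fun δ => ?_
    congr 1
    push_cast
    ring
  refine (hlim.add ((hlogb.sub hloga).const_mul (f x))).congr' ?_
  filter_upwards [self_mem_nhdsWithin] with δ hδ
  have hz : ((x : ℂ) + (σ * δ : ℝ) * I).im ≠ 0 := by
    simpa using ⟨hσ0, (ne_of_gt hδ : δ ≠ 0)⟩
  obtain ⟨hinteg', hval⟩ := integral_inv_ofReal_sub (a := a) (b := b) hz
  rw [← hval, ← intervalIntegral.integral_const_mul,
    ← intervalIntegral.integral_add (hinteg δ hδ) (hinteg'.const_mul _)]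
  refine intervalIntegral.integral_congr fun t _ => ?_
  simp only [div_eq_mul_inv]
  ring

/-- A product of two power singularities at distinct points is dominated by their sum. -/
theorem rpow_mul_rpow_le_add {x y c p q : ℝ} (hx : 0 < x) (hy : 0 < y) (hc : 0 < c)
    (hxy : 2 * c ≤ x + y) (hp : p ≤ 0) (hq : q ≤ 0) :
    x ^ p * y ^ q ≤ c ^ p * y ^ q + c ^ q * x ^ p := by
  have hxp := Real.rpow_nonneg hx.le p
  have hyq := Real.rpow_nonneg hy.le q
  have hcp := Real.rpow_nonneg hc.le p
  have hcq := Real.rpow_nonneg hc.le q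
  rcases le_or_gt c x with h | h
  · have := Real.rpow_le_rpow_of_nonpos hc h hp
    nlinarith [mul_le_mul_of_nonneg_right this hyq, mul_nonneg hcq hxp]
  · have := Real.rpow_le_rpow_of_nonpos hc (by linarith : c ≤ y) hq
    nlinarith [mul_le_mul_of_nonneg_right this hxp, mul_nonneg hcp hyq]

/-- Difference quotients at an interior point of a Hölder function divided by `√(t - u)`
have an integrable bound. -/
theorem exists_bound_div_sqrt {u b x β M : ℝ} {h : ℝ → ℝ} (hx : x ∈ Ioo u b)
    (hβ0 : 0 < β) (hβ1 : β ≤ 1)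
    (hhold : ∀ t ∈ Icc u b, |h t - h x| ≤ M * |t - x| ^ β) :
    ∃ B : ℝ → ℝ, IntervalIntegrable B volume u b ∧ ∀ t ∈ Ioc u b, t ≠ x →
      |h t / √(t - u) - h x / √(x - u)| ≤ B t * |t - x| := by
  set c : ℝ := (x - u) / 2 with hc
  have hxu : 0 < x - u := sub_pos.mpr hx.1
  refine ⟨fun t => |M| * (c ^ (β - 1) * |t - u| ^ (-(1 / 2) : ℝ) +
      c ^ (-(1 / 2) : ℝ) * |t - x| ^ (β - 1)) + |h x| / (x - u) * |t - u| ^ (-(1 / 2) : ℝ),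
    ?_, fun t ht htx => ?_⟩
  · have hu := intervalIntegrable_abs_sub_rpow (a := u) (b := b) (x := u)
      (r := -(1 / 2)) (by norm_num)
    have hx := intervalIntegrable_abs_sub_rpow (a := u) (b := b) (x := x)
      (r := β - 1) (by linarith)
    exact (((hu.const_mul _).add (hx.const_mul _)).const_mul _).add (hu.const_mul _)
  have htu : 0 < t - u := sub_pos.mpr ht.1
  have hd : 0 < |t - x| := abs_pos.mpr (sub_ne_zero.mpr htx)
  have hprod := rpow_mul_rpow_le_add (p := β - 1) (q := -(1 / 2)) hd (abs_pos.mpr htu.ne')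
    (half_pos hxu) (by
      rw [abs_of_pos htu]
      linarith [neg_abs_le (t - x)]) (by linarith) (by norm_num)
  rw [← hc] at hprod
  have hs : 0 < √(t - u) := Real.sqrt_pos.mpr htu
  have hs0 : 0 < √(x - u) := Real.sqrt_pos.mpr hxu
  have hinv : |t - u| ^ (-(1 / 2) : ℝ) = (√(t - u))⁻¹ := by
    rw [abs_of_pos htu, Real.rpow_neg htu.le, Real.sqrt_eq_rpow]
  have hpow : |t - x| ^ β = |t - x| ^ (β - 1) * |t - x| := by
    rw [Real.rpow_sub_one hd.ne', div_mul_cancel₀ _ hd.ne']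
  have hsplit : h t / √(t - u) - h x / √(x - u) =
      (h t - h x) * (√(t - u))⁻¹ + h x * ((√(t - u))⁻¹ - (√(x - u))⁻¹) := by
    ring
  have hfirst : |(h t - h x) * (√(t - u))⁻¹| ≤
      |M| * (|t - x| ^ (β - 1) * (√(t - u))⁻¹) * |t - x| := by
    rw [abs_mul, abs_of_pos (inv_pos.mpr hs)]
    have h1 : |h t - h x| ≤ |M| * |t - x| ^ β :=
      (hhold t ⟨ht.1.le, ht.2⟩).trans (by gcongr; exact le_abs_self M)
    rw [hpow] at h1
    calc _ ≤ |M| * (|t - x| ^ (β - 1) * |t - x|) * (√(t - u))⁻¹ := by gcongr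
      _ = _ := by ring
  have hsecond : |(√(t - u))⁻¹ - (√(x - u))⁻¹| ≤ (√(t - u))⁻¹ / (x - u) * |t - x| := by
    have heq : (√(t - u))⁻¹ - (√(x - u))⁻¹ =
        (x - t) * ((√(t - u))⁻¹ / (√(x - u) * (√(t - u) + √(x - u)))) := by
      have h1 := Real.sq_sqrt htu.le
      have h2 := Real.sq_sqrt hxu.le
      have h3 : x - t = √(x - u) ^ 2 - √(t - u) ^ 2 := by rw [h1, h2]; ring
      rw [h3]
      field_simp
      ring
    rw [heq, abs_mul, abs_sub_comm, mul_comm, abs_of_pos (by positivity)]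
    gcongr
    nlinarith [Real.sq_sqrt hxu.le, mul_pos hs hs0]
  rw [hsplit]
  calc _ ≤ |(h t - h x) * (√(t - u))⁻¹| + |h x| * |(√(t - u))⁻¹ - (√(x - u))⁻¹| := by
        rw [← abs_mul]
        exact abs_add_le _ _
    _ ≤ |M| * (|t - x| ^ (β - 1) * (√(t - u))⁻¹) * |t - x| +
        |h x| * ((√(t - u))⁻¹ / (x - u) * |t - x|) := by gcongr
    _ = (|M| * (|t - x| ^ (β - 1) * |t - u| ^ (-(1 / 2) : ℝ)) +
        |h x| / (x - u) * |t - u| ^ (-(1 / 2) : ℝ)) * |t - x| := by rw [hinv]; ring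
    _ ≤ _ := by
        beta_reduce
        gcongr

theorem continuousOn_of_abs_sub_le_rpow {s : Set ℝ} {h : ℝ → ℝ} {β M : ℝ} (hβ : 0 < β)
    (hhold : ∀ x ∈ s, ∀ y ∈ s, |h x - h y| ≤ M * |x - y| ^ β) : ContinuousOn h s := by
  intro x hx
  refine tendsto_iff_dist_tendsto_zero.mpr ?_
  have hcont : Continuous fun y : ℝ => M * |y - x| ^ β :=
    continuous_const.mul ((by fun_prop : Continuous fun y : ℝ => |y - x|).rpow_const
      fun _ => Or.inr hβ.le)
  have hlim : Tendsto (fun y : ℝ => M * |y - x| ^ β) (𝓝[s] x) (𝓝 0) := by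
    simpa [Real.zero_rpow hβ.ne'] using (hcont.tendsto x).mono_left nhdsWithin_le_nhds
  refine squeeze_zero' (Eventually.of_forall fun _ => dist_nonneg) ?_ hlim
  filter_upwards [self_mem_nhdsWithin] with y hy
  exact hhold y hy x hx

/-- Vertical boundary values of the square root on the negative real axis. -/
theorem tendsto_cpow_half_vertical {c σ : ℝ} (hc : 0 < c) (hσ : σ = 1 ∨ σ = -1) :
    Tendsto (fun δ : ℝ => (-(c : ℂ) - (σ * δ : ℝ) * I) ^ ((1 : ℂ) / 2)) (𝓝[>] 0)
      (𝓝 (-σ * √c * I)) := by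
  have hexp : Complex.exp ((Real.log c - σ * Real.pi * I) * (1 / 2)) = -σ * √c * I := by
    have h1 : Complex.exp ((Real.log c : ℂ) * (1 / 2)) = √c := by
      rw [Real.sqrt_eq_rpow, Real.rpow_def_of_pos hc]
      push_cast
      rfl
    have h2 : Complex.exp (-(σ * Real.pi * I) * (1 / 2)) = -σ * I := by
      rcases hσ with rfl | rfl
      · rw [show -(((1 : ℝ) : ℂ) * Real.pi * I) * (1 / 2) = -(Real.pi / 2 * I) by push_cast; ring,
          Complex.exp_neg, Complex.exp_pi_div_two_mul_I]
        simp
      · rw [show -(((-1 : ℝ) : ℂ) * Real.pi * I) * (1 / 2) = Real.pi / 2 * I by push_cast; ring,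
          Complex.exp_pi_div_two_mul_I]
        simp
    rw [sub_eq_add_neg, add_mul, Complex.exp_add, h1, h2]
    ring
  rw [← hexp]
  refine (((tendsto_log_vertical hc hσ).mul_const (1 / 2)).cexp).congr fun δ => ?_
  rw [Complex.cpow_def_of_ne_zero]
  intro h0
  have := congrArg Complex.re h0
  simp [hc.ne'] at this

/-- Sokhotski–Plemelj-type jump relation (3.6) of the `G`-function on `(u, 0)`:
for Hölder continuous `h`, the boundary values `G_±(λ₀)` exist and satisfy
`G_+(λ₀) + G_-(λ₀) = 2 h(λ₀)`. -/
theorem stmt10 (u : ℝ) (hu : u < 0) (β M : ℝ) (hβ0 : 0 < β) (hβ1 : β ≤ 1)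
    (h : ℝ → ℝ)
    (hhold : ∀ x ∈ Set.Icc u (0 : ℝ), ∀ y ∈ Set.Icc u (0 : ℝ),
      |h x - h y| ≤ M * |x - y| ^ β)
    (G : ℂ → ℂ)
    (hG : ∀ l : ℂ, G l = (((u : ℂ) - l) ^ ((1 : ℂ) / 2)) / (Real.pi : ℂ) *
        ∫ η in u..(0 : ℝ), (h η : ℂ) / ((Real.sqrt (η - u) : ℂ) * ((η : ℂ) - l))) :
    ∀ l₀ ∈ Set.Ioo u (0 : ℝ),
      ∃ Gp Gm : ℂ,
        Tendsto (fun δ : ℝ => G ((l₀ : ℂ) + δ * Complex.I))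
          (nhdsWithin 0 (Set.Ioi 0)) (nhds Gp) ∧
        Tendsto (fun δ : ℝ => G ((l₀ : ℂ) - δ * Complex.I))
          (nhdsWithin 0 (Set.Ioi 0)) (nhds Gm) ∧
        Gp + Gm = 2 * (h l₀ : ℂ) := by
  intro l₀ hl₀
  have hpos : 0 < l₀ - u := sub_pos.mpr hl₀.1
  set f : ℝ → ℂ := fun t => ((h t / √(t - u) : ℝ) : ℂ) with hf
  have hfcont : ContinuousOn f (Ioc u 0) := by
    refine Complex.continuous_ofReal.comp_continuousOn ?_
    refine ((continuousOn_of_abs_sub_le_rpow hβ0 hhold).mono Ioc_subset_Icc_self).div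
      (by fun_prop) fun t ht => (Real.sqrt_pos.mpr (sub_pos.mpr ht.1)).ne'
  obtain ⟨B, hB, hfB⟩ := exists_bound_div_sqrt hl₀ hβ0 hβ1
    fun t ht => hhold t ht l₀ ⟨hl₀.1.le, hl₀.2.le⟩
  have hfB' : ∀ t ∈ Ioc u 0, t ≠ l₀ → ‖f t - f l₀‖ ≤ B t * |t - l₀| := by
    intro t ht htl
    rw [hf, ← Complex.ofReal_sub, Complex.norm_real]
    exact hfB t ht htl
  have key : ∀ σ : ℝ, σ = 1 ∨ σ = -1 →
      Tendsto (fun δ : ℝ => G (l₀ + (σ * δ : ℝ) * I)) (𝓝[>] 0)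
        (𝓝 (-σ * √(l₀ - u) * I / Real.pi *
          ((∫ t in u..0, (f t - f l₀) / ((t : ℂ) - l₀)) +
            f l₀ * (Real.log (0 - l₀) - (Real.log (l₀ - u) - σ * Real.pi * I))))) := by
    intro σ hσ
    refine (((tendsto_cpow_half_vertical hpos hσ).div_const _).mul
      (tendsto_cauchyIntegral_vertical hl₀ hfcont hB hfB' hσ)).congr fun δ => ?_
    rw [hG]
    congr 3
    · push_cast
      ring
    · funext t
      simp only [hf]
      push_cast
      rw [div_div]
  refine ⟨_, _, by simpa only [one_mul] using key 1 (Or.inl rfl),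
    (key (-1) (Or.inr rfl)).congr fun δ => ?_, ?_⟩
  · congr 1
    push_cast
    ring
  · have hs : ((√(l₀ - u) : ℝ) : ℂ) ≠ 0 := by
      exact_mod_cast (Real.sqrt_pos.mpr hpos).ne'
    have hpi : (Real.pi : ℂ) ≠ 0 := by exact_mod_cast Real.pi_ne_zero
    have hfl : f l₀ = (h l₀ : ℂ) / (√(l₀ - u) : ℝ) := by simp [hf]
    generalize (∫ t in u..0, (f t - f l₀) / ((t : ℂ) - l₀)) = J
    rw [hfl]
    push_cast
    field_simp
    ring_nf
    simp only [Complex.I_sq]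
    ring
end

section
/- Let $u < 0$ and define, for $\lambda \in \mathbb{C} \setminus [u, \infty)$, the $2 \times 2$ matrix $P^{(\infty)}(\lambda) = (-\lambda)^{1/4} \begin{pmatrix} (u - \lambda)^{-1/4} & 0 \\ 0 & (u - \lambda)^{1/4} \end{pmatrix} \begin{pmatrix} 1 & 1 \\ i & -i \end{pmatrix}$. Then for every $\lambda_0 > 0$, the boundary values $P^{(\infty)}_\pm(\lambda_0) = \lim_{\delta \to 0^+} P^{(\infty)}(\lambda_0 \pm i\delta)$ exist and satisfy $P^{(\infty)}_+(\lambda_0) = P^{(\infty)}_-(\lambda_0)\,\sigma_1$, and for every $\lambda_0 \in (u, 0)$ they exist and satisfy $P^{(\infty)}_+(\lambda_0) = i\, P^{(\infty)}_-(\lambda_0)\,\sigma_1$, where $\sigma_1 = \begin{pmatrix} 0 & 1 \\ 1 & 0 \end{pmatrix}$. -/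
open Set Complex Filter

/-- The limit of a complex power at the negative real axis, approached from below. -/
lemma tendsto_cpow_sub_mul_I {x : ℝ} (hx : x < 0) (s : ℂ) :
    Tendsto (fun δ : ℝ => ((x : ℂ) - δ * I) ^ s) (nhdsWithin 0 (Ioi 0))
      (nhds (exp ((Real.log ‖(x : ℂ)‖ - Real.pi * I) * s))) := by
  have hlim : Tendsto (fun δ : ℝ => (x : ℂ) - δ * I) (nhdsWithin 0 (Ioi 0))
      (nhdsWithin (x : ℂ) {z | z.im < 0}) := by
    refine tendsto_nhdsWithin_iff.2 ⟨?_, ?_⟩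
    · have h : Continuous fun δ : ℝ => (x : ℂ) - δ * I := by fun_prop
      simpa using (h.tendsto 0).mono_left nhdsWithin_le_nhds
    · filter_upwards [self_mem_nhdsWithin] with δ hδ
      simpa using hδ
  have hlog := (tendsto_log_nhdsWithin_im_neg_of_re_neg_of_im_zero
    (z := (x : ℂ)) (by simpa using hx) (by simp)).comp hlim
  refine ((continuous_exp.tendsto _).comp (hlog.mul_const s)).congr fun δ => ?_
  have hne : (x : ℂ) - δ * I ≠ 0 := fun h => hx.ne (by simpa using congrArg re h)
  simp [cpow_def_of_ne_zero hne]

/-- The limit of a complex power at the negative real axis, approached from above. -/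
lemma tendsto_cpow_add_mul_I {x : ℝ} (hx : x < 0) (s : ℂ) :
    Tendsto (fun δ : ℝ => ((x : ℂ) + δ * I) ^ s) (nhdsWithin 0 (Ioi 0))
      (nhds (exp ((Real.log ‖(x : ℂ)‖ + Real.pi * I) * s))) := by
  have hlim : Tendsto (fun δ : ℝ => (x : ℂ) + δ * I) (nhdsWithin 0 (Ioi 0))
      (nhdsWithin (x : ℂ) {z | 0 ≤ z.im}) := by
    refine tendsto_nhdsWithin_iff.2 ⟨?_, ?_⟩
    · have h : Continuous fun δ : ℝ => (x : ℂ) + δ * I := by fun_prop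
      simpa using (h.tendsto 0).mono_left nhdsWithin_le_nhds
    · filter_upwards [self_mem_nhdsWithin] with δ hδ
      simpa using (mem_Ioi.1 hδ).le
  have hlog := (tendsto_log_nhdsWithin_im_nonneg_of_re_neg_of_im_zero
    (z := (x : ℂ)) (by simpa using hx) (by simp)).comp hlim
  refine ((continuous_exp.tendsto _).comp (hlog.mul_const s)).congr fun δ => ?_
  have hne : (x : ℂ) + δ * I ≠ 0 := fun h => hx.ne (by simpa using congrArg re h)
  simp [cpow_def_of_ne_zero hne]

/-- Across the negative real axis, `z ^ (1 / 4)` from below is `-I` times its value from above. -/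
lemma exp_sub_pi_mul_I_mul_quarter (w : ℂ) :
    exp ((w - Real.pi * I) * (1 / 4)) = -I * exp ((w + Real.pi * I) * (1 / 4)) := by
  rw [← exp_neg_pi_div_two_mul_I, ← exp_add]
  ring_nf

/-- Across the negative real axis, `z ^ (-1 / 4)` from below is `I` times its value from above. -/
lemma exp_sub_pi_mul_I_mul_neg_quarter (w : ℂ) :
    exp ((w - Real.pi * I) * (-1 / 4)) = I * exp ((w + Real.pi * I) * (-1 / 4)) := by
  nth_rw 2 [← exp_pi_div_two_mul_I]
  rw [← exp_add]
  ring_nf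

/-- Entrywise limits of a matrix `a • diag(b, c) * !![1, 1; I, -I]`. -/
lemma tendsto_smul_diag_mul_apply {α : Type*} {l : Filter α} {a b c : α → ℂ} {a₀ b₀ c₀ : ℂ}
    (ha : Tendsto a l (nhds a₀)) (hb : Tendsto b l (nhds b₀)) (hc : Tendsto c l (nhds c₀))
    (i j : Fin 2) :
    Tendsto (fun t => (a t • (!![b t, 0; 0, c t] * !![1, 1; I, -I])) i j) l
      (nhds ((a₀ • (!![b₀, 0; 0, c₀] * !![1, 1; I, -I])) i j)) := by
  fin_cases i <;> fin_cases j <;> simp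
  · exact ha.mul hb
  · exact ha.mul hb
  · exact ha.mul (hc.mul_const I)
  · exact ha.mul (hc.mul_const I)

/-- The explicit outside parametrix (3.30) satisfies the jump conditions (3.27)-(3.28):
`P⁽∞⁾₊(λ₀) = P⁽∞⁾₋(λ₀) σ₁` on `(0, ∞)` and `P⁽∞⁾₊(λ₀) = i P⁽∞⁾₋(λ₀) σ₁` on `(u, 0)`. -/
theorem stmt11 (u : ℝ) (hu : u < 0)
    (P : ℂ → Matrix (Fin 2) (Fin 2) ℂ)
    (hP : ∀ l : ℂ, P l = ((-l) ^ ((1 : ℂ) / 4)) •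
        (!![((u : ℂ) - l) ^ (-(1 : ℂ) / 4), 0; 0, ((u : ℂ) - l) ^ ((1 : ℂ) / 4)] *
          !![1, 1; Complex.I, -Complex.I])) :
    (∀ l₀ : ℝ, 0 < l₀ →
      ∃ Pp Pm : Matrix (Fin 2) (Fin 2) ℂ,
        (∀ i j, Tendsto (fun δ : ℝ => P ((l₀ : ℂ) + δ * Complex.I) i j)
          (nhdsWithin 0 (Set.Ioi 0)) (nhds (Pp i j))) ∧
        (∀ i j, Tendsto (fun δ : ℝ => P ((l₀ : ℂ) - δ * Complex.I) i j)
          (nhdsWithin 0 (Set.Ioi 0)) (nhds (Pm i j))) ∧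
        Pp = Pm * !![0, 1; 1, 0]) ∧
    (∀ l₀ : ℝ, u < l₀ → l₀ < 0 →
      ∃ Pp Pm : Matrix (Fin 2) (Fin 2) ℂ,
        (∀ i j, Tendsto (fun δ : ℝ => P ((l₀ : ℂ) + δ * Complex.I) i j)
          (nhdsWithin 0 (Set.Ioi 0)) (nhds (Pp i j))) ∧
        (∀ i j, Tendsto (fun δ : ℝ => P ((l₀ : ℂ) - δ * Complex.I) i j)
          (nhdsWithin 0 (Set.Ioi 0)) (nhds (Pm i j))) ∧
        Pp = Complex.I • (Pm * !![0, 1; 1, 0])) := by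
  have hneg_add (l₀ δ : ℝ) : -((l₀ : ℂ) + δ * I) = ((-l₀ : ℝ) : ℂ) - δ * I := by
    push_cast; ring
  have hneg_sub (l₀ δ : ℝ) : -((l₀ : ℂ) - δ * I) = ((-l₀ : ℝ) : ℂ) + δ * I := by
    push_cast; ring
  have hsub_add (l₀ δ : ℝ) : (u : ℂ) - ((l₀ : ℂ) + δ * I) = ((u - l₀ : ℝ) : ℂ) - δ * I := by
    push_cast; ring
  have hsub_sub (l₀ δ : ℝ) : (u : ℂ) - ((l₀ : ℂ) - δ * I) = ((u - l₀ : ℝ) : ℂ) + δ * I := by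
    push_cast; ring
  refine ⟨fun l₀ h₀ => ?_, fun l₀ hl h₀ => ?_⟩
  · have hx : -l₀ < 0 := neg_lt_zero.2 h₀
    have hy : u - l₀ < 0 := by linarith
    have hp := tendsto_smul_diag_mul_apply (tendsto_cpow_sub_mul_I hx (1 / 4))
      (tendsto_cpow_sub_mul_I hy (-1 / 4)) (tendsto_cpow_sub_mul_I hy (1 / 4))
    have hm := tendsto_smul_diag_mul_apply (tendsto_cpow_add_mul_I hx (1 / 4))
      (tendsto_cpow_add_mul_I hy (-1 / 4)) (tendsto_cpow_add_mul_I hy (1 / 4))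
    refine ⟨_, _, fun i j => (hp i j).congr fun δ => ?_, fun i j => (hm i j).congr fun δ => ?_, ?_⟩
    · rw [hP, hneg_add, hsub_add]
    · rw [hP, hneg_sub, hsub_sub]
    · simp only [exp_sub_pi_mul_I_mul_quarter, exp_sub_pi_mul_I_mul_neg_quarter]
      ext i j
      fin_cases i <;> fin_cases j <;> simp <;> ring_nf <;> simp
  · have hx : 0 < (-(l₀ : ℂ)).re := by simpa using h₀
    have hy : u - l₀ < 0 := sub_neg.2 hl
    have hcont : ContinuousAt (fun z : ℂ => z ^ ((1 : ℂ) / 4)) (-(l₀ : ℂ)) :=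
      continuousAt_cpow_const (Or.inl hx)
    have hap : Tendsto (fun δ : ℝ => (-((l₀ : ℂ) + δ * I)) ^ ((1 : ℂ) / 4))
        (nhdsWithin 0 (Ioi 0)) (nhds ((-(l₀ : ℂ)) ^ ((1 : ℂ) / 4))) := by
      have h : Continuous fun δ : ℝ => -((l₀ : ℂ) + δ * I) := by fun_prop
      exact hcont.tendsto.comp
        (by simpa using (h.tendsto 0).mono_left nhdsWithin_le_nhds)
    have ham : Tendsto (fun δ : ℝ => (-((l₀ : ℂ) - δ * I)) ^ ((1 : ℂ) / 4))
        (nhdsWithin 0 (Ioi 0)) (nhds ((-(l₀ : ℂ)) ^ ((1 : ℂ) / 4))) := by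
      have h : Continuous fun δ : ℝ => -((l₀ : ℂ) - δ * I) := by fun_prop
      exact hcont.tendsto.comp
        (by simpa only [ofReal_zero, zero_mul, sub_zero] using
          (h.tendsto 0).mono_left nhdsWithin_le_nhds)
    have hp := tendsto_smul_diag_mul_apply hap
      (tendsto_cpow_sub_mul_I hy (-1 / 4)) (tendsto_cpow_sub_mul_I hy (1 / 4))
    have hm := tendsto_smul_diag_mul_apply ham
      (tendsto_cpow_add_mul_I hy (-1 / 4)) (tendsto_cpow_add_mul_I hy (1 / 4))
    refine ⟨_, _, fun i j => (hp i j).congr fun δ => ?_, fun i j => (hm i j).congr fun δ => ?_, ?_⟩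
    · rw [hP, hsub_add]
    · rw [hP, hsub_sub]
    · simp only [exp_sub_pi_mul_I_mul_quarter, exp_sub_pi_mul_I_mul_neg_quarter]
      ext i j
      fin_cases i <;> fin_cases j <;> simp <;> ring_nf
end

section
/- Let $u \in \mathbb{R}$, $\delta > 0$, and let $h : [u - \delta, u] \to \mathbb{R}$ be continuous with $h(u) < 0$. Define $F(\lambda) = \int_\lambda^u h(\xi) \sqrt{\xi - \lambda}\,d\xi$ for $\lambda \in [u - \delta, u]$. Then there is $\delta' \in (0, \delta]$ such that $F(\lambda) < 0$ for $\lambda \in [u - \delta', u)$, and the function $\zeta(\lambda) := -\big( -\tfrac{3}{2} F(\lambda) \big)^{2/3}$ (real $2/3$-power of a positive number), extended by $\zeta(u) = 0$, satisfies $\lim_{\lambda \to u^-} \frac{\zeta(\lambda)}{\lambda - u} = (-h(u))^{2/3}$. -/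
open Set MeasureTheory intervalIntegral Filter

theorem integral_sqrt_sub_left (l u : ℝ) :
    ∫ ξ in l..u, Real.sqrt (ξ - l) = 2 / 3 * (u - l) ^ ((3 : ℝ) / 2) := by
  rw [intervalIntegral.integral_comp_sub_right (fun x => Real.sqrt x) l]
  simp only [Real.sqrt_eq_rpow, sub_self]
  rw [integral_rpow (Or.inl (by norm_num))]
  norm_num
  ring

theorem integral_mul_sqrt_le {h g : ℝ → ℝ} {l u : ℝ} (hlu : l ≤ u)
    (hh : ContinuousOn h (Set.Icc l u)) (hg : ContinuousOn g (Set.Icc l u))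
    (hle : ∀ ξ ∈ Set.Icc l u, h ξ ≤ g ξ) :
    ∫ ξ in l..u, h ξ * Real.sqrt (ξ - l) ≤ ∫ ξ in l..u, g ξ * Real.sqrt (ξ - l) := by
  have hs : ContinuousOn (fun ξ => Real.sqrt (ξ - l)) (Set.Icc l u) := by fun_prop
  exact intervalIntegral.integral_mono_on hlu
    ((hh.mul hs).intervalIntegrable_of_Icc hlu) ((hg.mul hs).intervalIntegrable_of_Icc hlu)
    fun ξ hξ => mul_le_mul_of_nonneg_right (hle ξ hξ) (Real.sqrt_nonneg _)

/-- The leading coefficient of `∫_l^u h(ξ)√(ξ-l) dξ` as `l → u⁻`. -/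
theorem tendsto_integral_mul_sqrt_div {u δ : ℝ} (hδ : 0 < δ) {h : ℝ → ℝ}
    (hc : ContinuousOn h (Set.Icc (u - δ) u)) :
    Tendsto (fun l => (∫ ξ in l..u, h ξ * Real.sqrt (ξ - l)) / (u - l) ^ ((3 : ℝ) / 2))
      (nhdsWithin u (Set.Iio u)) (nhds (2 / 3 * h u)) := by
  rw [Metric.tendsto_nhds]
  intro ε hε
  have hcu := Metric.continuousWithinAt_iff.1 (hc u ⟨by linarith, le_rfl⟩) ε hε
  obtain ⟨η, hη, hclose⟩ := hcu
  have hnear : Set.Ioo (u - min δ η) u ∈ nhdsWithin u (Set.Iio u) :=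
    Ioo_mem_nhdsLT (by linarith [lt_min hδ hη])
  filter_upwards [hnear] with l hl
  have hlδ : u - δ < l := by linarith [hl.1, min_le_left δ η]
  have hlη : u - η < l := by linarith [hl.1, min_le_right δ η]
  have hlu : l ≤ u := hl.2.le
  have hhl : ContinuousOn h (Set.Icc l u) := hc.mono (Set.Icc_subset_Icc_left hlδ.le)
  have hbd : ∀ ξ ∈ Set.Icc l u, |h ξ - h u| < ε := fun ξ hξ =>
    hclose ⟨by linarith [hξ.1], hξ.2⟩ (by
      rw [Real.dist_eq, abs_lt]
      constructor <;> linarith [hξ.1, hξ.2])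
  have hupper := integral_mul_sqrt_le (g := fun _ => h u + ε) hlu hhl continuousOn_const
    fun ξ hξ => by linarith [(abs_lt.1 (hbd ξ hξ)).2]
  have hlower := integral_mul_sqrt_le (h := fun _ => h u - ε) hlu continuousOn_const hhl
    fun ξ hξ => by linarith [(abs_lt.1 (hbd ξ hξ)).1]
  rw [intervalIntegral.integral_const_mul, integral_sqrt_sub_left] at hupper hlower
  have hw : 0 < (u - l) ^ ((3 : ℝ) / 2) := Real.rpow_pos_of_pos (by linarith [hl.2]) _
  have hεw := mul_pos hε hw
  rw [Real.dist_eq, abs_lt, lt_sub_iff_add_lt, sub_lt_iff_lt_add, lt_div_iff₀ hw, div_lt_iff₀ hw]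
  constructor <;> nlinarith

/-- Equations (3.37)-(3.38) (one-sided real version): the Airy-type conformal map
`ζ(λ) = -(-3/2 F(λ))^{2/3}` built from `F(λ) = ∫_λ^u h(ξ)√(ξ-λ) dξ` with `h(u) < 0`
satisfies `lim_{λ→u⁻} ζ(λ)/(λ-u) = (-h(u))^{2/3}`. -/
theorem stmt14 (u δ : ℝ) (hδ : 0 < δ) (h : ℝ → ℝ)
    (hc : ContinuousOn h (Set.Icc (u - δ) u)) (hu : h u < 0)
    (F : ℝ → ℝ)
    (hF : ∀ l ∈ Set.Icc (u - δ) u, F l = ∫ ξ in l..u, h ξ * Real.sqrt (ξ - l))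
    (ζ : ℝ → ℝ)
    (hζ : ∀ l ∈ Set.Icc (u - δ) u, ζ l = -((-(3 / 2 : ℝ) * F l) ^ ((2 : ℝ) / 3)))
    (hζu : ζ u = 0) :
    ∃ δ' : ℝ, 0 < δ' ∧ δ' ≤ δ ∧ (∀ l ∈ Set.Ico (u - δ') u, F l < 0) ∧
      Tendsto (fun l => ζ l / (l - u)) (nhdsWithin u (Set.Iio u))
        (nhds ((-h u) ^ ((2 : ℝ) / 3))) := by
  have hlim := tendsto_integral_mul_sqrt_div hδ hc
  have hIcc : ∀ᶠ l in nhdsWithin u (Set.Iio u), l ∈ Set.Ioo (u - δ) u :=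
    Ioo_mem_nhdsLT (by linarith)
  have hFlim : Tendsto (fun l => F l / (u - l) ^ ((3 : ℝ) / 2)) (nhdsWithin u (Set.Iio u))
      (nhds (2 / 3 * h u)) := by
    refine hlim.congr' ?_
    filter_upwards [hIcc] with l hl
    rw [hF l ⟨hl.1.le, hl.2.le⟩]
  have hneg : ∀ᶠ l in nhdsWithin u (Set.Iio u), F l < 0 := by
    filter_upwards [hFlim.eventually_lt_const (by linarith : 2 / 3 * h u < 0), hIcc] with l hlt hl
    have hw : 0 < (u - l) ^ ((3 : ℝ) / 2) := Real.rpow_pos_of_pos (by linarith [hl.2]) _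
    simpa using (div_lt_iff₀ hw).1 hlt
  obtain ⟨a, ha, hsub⟩ := mem_nhdsLT_iff_exists_Ico_subset.1 hneg
  have hau : a < u := ha
  refine ⟨min δ (u - a), lt_min hδ (by linarith), min_le_left _ _, fun l hl => ?_, ?_⟩
  · exact hsub ⟨by linarith [hl.1, min_le_right δ (u - a)], hl.2⟩
  · have hpow := (hFlim.const_mul (-(3 / 2 : ℝ))).rpow_const (p := (2 : ℝ) / 3)
      (Or.inr (by norm_num))
    rw [show -(3 / 2 : ℝ) * (2 / 3 * h u) = -h u by ring] at hpow
    refine hpow.congr' ?_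
    filter_upwards [hneg, hIcc] with l hlneg hl
    have hul : 0 < u - l := by linarith [hl.2]
    rw [hζ l ⟨hl.1.le, hl.2.le⟩, ← mul_div_assoc,
      Real.div_rpow (by linarith) (Real.rpow_nonneg hul.le _), ← Real.rpow_mul hul.le,
      show (3 : ℝ) / 2 * (2 / 3) = 1 by norm_num, Real.rpow_one, ← neg_sub u l, neg_div_neg_eq]
end
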